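/- Consider the interval mean-payoff game (G, I) where G has vertices V = {q_0, q_1} with V_∃ = {q_0}, initial vertex q_0, and edges: a self-loop on q_0 of weight 0, an edge q_0 → q_1 of weight 1, a self-loop on q_1 of weight 2, and an edge q_1 → q_0 of weight 1; the winning set is I = (0, 1] ∪ [2, ∞). Then Eve has a winning strategy in this game, but she has no finite-memory winning strategy: for every strategy of Eve computed by a finite-state machine there is a consistent play π with MP(π) ∉ I. -/

import Mathlib

/-!
An edge `u → v` has weight `u + v`, so the mean-payoff of a play is twice the lower asymptotic
frequency of `q₁`. Both players use the same balancing rule: whenever the token is in your own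
vertex, stay there until the other vertex makes up less than a quarter of the history. This keeps
the frequency of the opponent's vertex essentially at least `1/4` at all times, and returns to
about `1/4` after each visit to your own vertex.

If Eve balances, then either `q₀` is visited infinitely often and the lower frequency of `q₁` is
exactly `1/4`, giving mean-payoff `1/2`, or the play eventually stays in `q₁`, giving `2`.

If Adam balances against a finite-state machine, the machine's memory evolves autonomously during
a stay in `q₀`, so such a stay is either infinite, giving mean-payoff `0`, or uniformly bounded.
In the latter case the frequency of `q₀` not only returns to `1/4` but converges to it, and the
mean-payoff is `3/2`. An infinite-memory Eve escapes this because her stays in `q₀` can be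
unboundedly long: the limit inferior only sees the times at which `q₁` is rare.
-/

open Filter

/-- A game graph: vertex set `V`, Eve's vertices `Eve`, edge relation `E` (every vertex
has a successor), integer weight function `w`, and initial vertex `init`. -/
structure GameGraph (V : Type) where
  Eve : Set V
  E : V → V → Prop
  w : V → V → ℤ
  init : V
  succ : ∀ v, ∃ u, E v u

namespace GameGraph

variable {V : Type}

/-- `π` is a play starting at vertex `v`. -/
def IsPlayFrom (G : GameGraph V) (v : V) (π : ℕ → V) : Prop :=
  π 0 = v ∧ ∀ i, G.E (π i) (π (i + 1))

/-- `π` is a play (from the initial vertex). -/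
def IsPlay (G : GameGraph V) (π : ℕ → V) : Prop :=
  G.IsPlayFrom G.init π

/-- The prefix `π 0, …, π i` of a play, as a list. -/
def prefixList (π : ℕ → V) (i : ℕ) : List V :=
  List.ofFn (fun j : Fin (i + 1) => π j)

/-- A (history-based) strategy for Eve is legal if it always proposes a successor
of the current (Eve) vertex. -/
def EveLegal (G : GameGraph V) (σ : List V → V) : Prop :=
  ∀ (l : List V) (v : V), v ∈ G.Eve → G.E v (σ (l ++ [v]))

/-- A (history-based) strategy for Adam is legal if it always proposes a successor
of the current (Adam) vertex. -/
def AdamLegal (G : GameGraph V) (σ : List V → V) : Prop :=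
  ∀ (l : List V) (v : V), v ∉ G.Eve → G.E v (σ (l ++ [v]))

/-- The play `π` is consistent with Eve's strategy `σ`. -/
def ConsEve (G : GameGraph V) (σ : List V → V) (π : ℕ → V) : Prop :=
  ∀ i, π i ∈ G.Eve → π (i + 1) = σ (prefixList π i)

/-- The play `π` is consistent with Adam's strategy `σ`. -/
def ConsAdam (G : GameGraph V) (σ : List V → V) (π : ℕ → V) : Prop :=
  ∀ i, π i ∉ G.Eve → π (i + 1) = σ (prefixList π i)

/-- Eve has a winning strategy for the objective `Win`. -/
def EveWins (G : GameGraph V) (Win : (ℕ → V) → Prop) : Prop :=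
  ∃ σ : List V → V, G.EveLegal σ ∧ ∀ π, G.IsPlay π → G.ConsEve σ π → Win π

/-- Adam has a winning strategy: he can ensure the objective `Win` of Eve fails. -/
def AdamWins (G : GameGraph V) (Win : (ℕ → V) → Prop) : Prop :=
  ∃ σ : List V → V, G.AdamLegal σ ∧ ∀ π, G.IsPlay π → G.ConsAdam σ π → ¬ Win π

/-- Consistency with a positional Eve strategy. -/
def ConsEvePos (G : GameGraph V) (f : V → V) (π : ℕ → V) : Prop :=
  ∀ i, π i ∈ G.Eve → π (i + 1) = f (π i)

/-- Consistency with a positional Adam strategy. -/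
def ConsAdamPos (G : GameGraph V) (f : V → V) (π : ℕ → V) : Prop :=
  ∀ i, π i ∉ G.Eve → π (i + 1) = f (π i)

/-- Eve has a positional (memoryless) winning strategy. -/
def EveWinsPos (G : GameGraph V) (Win : (ℕ → V) → Prop) : Prop :=
  ∃ f : V → V, (∀ v ∈ G.Eve, G.E v (f v)) ∧
    ∀ π, G.IsPlay π → G.ConsEvePos f π → Win π

/-- Adam has a positional (memoryless) winning strategy. -/
def AdamWinsPos (G : GameGraph V) (Win : (ℕ → V) → Prop) : Prop :=
  ∃ f : V → V, (∀ v, v ∉ G.Eve → G.E v (f v)) ∧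
    ∀ π, G.IsPlay π → G.ConsAdamPos f π → ¬ Win π

/-- The run of the memory structure `(δ, m)` of a finite-state machine while
reading the play `π`: after `i` steps it has read `π 0, …, π (i-1)`. -/
def memRun {M : Type} (δ : M → V → M) (m : M) (π : ℕ → V) : ℕ → M
  | 0 => m
  | i + 1 => δ (memRun δ m π i) (π i)

/-- Consistency of a play with the finite-memory strategy given by the machine
`(m0, δ, o)`: at step `i`, the machine has memory `memRun δ m0 π i` (having read
`π 0, …, π (i-1)`) and outputs the move `o (memRun δ m0 π i) (π i)`. -/
def ConsEveFM (G : GameGraph V) {M : Type} (m0 : M) (δ : M → V → M)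
    (o : M → V → V) (π : ℕ → V) : Prop :=
  ∀ i, π i ∈ G.Eve → π (i + 1) = o (memRun δ m0 π i) (π i)

/-- Eve has a finite-memory winning strategy, i.e. one computed by a
finite-state machine. -/
def EveWinsFM (G : GameGraph V) (Win : (ℕ → V) → Prop) : Prop :=
  ∃ (M : Type) (_ : Fintype M) (m0 : M) (δ : M → V → M) (o : M → V → V),
    (∀ m, ∀ v ∈ G.Eve, G.E v (o m v)) ∧
    ∀ π, G.IsPlay π → G.ConsEveFM m0 δ o π → Win π

/-- The total weight `w(π[..k])` of the length-`k` prefix of a play. -/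
def partialSum (G : GameGraph V) (π : ℕ → V) (k : ℕ) : ℤ :=
  ∑ i ∈ Finset.range k, G.w (π i) (π (i + 1))

/-- The (liminf) mean-payoff of a play. -/
noncomputable def MP (G : GameGraph V) (π : ℕ → V) : ℝ :=
  liminf (fun k => (G.partialSum π k : ℝ) / (k : ℝ)) atTop

/-- The liminf payoff of a play, in the extended reals. -/
noncomputable def liminfPayoff (G : GameGraph V) (π : ℕ → V) : EReal :=
  liminf (fun i => ((G.w (π i) (π (i + 1)) : ℝ) : EReal)) atTop

/-- The total-sum payoff of a play, in the extended reals. -/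
noncomputable def totalPayoff (G : GameGraph V) (π : ℕ → V) : EReal :=
  liminf (fun k => ((G.partialSum π k : ℝ) : EReal)) atTop

/-- The discounted sum of a play, with discount factor `lam`. -/
noncomputable def DS (G : GameGraph V) (lam : ℝ) (π : ℕ → V) : ℝ :=
  ∑' i : ℕ, lam ^ i * (G.w (π i) (π (i + 1)) : ℝ)

/-- A play of a (min-)parity game is winning for Eve iff the minimal priority
occurring infinitely often is even. -/
def ParityWin (Ω : V → ℕ) (π : ℕ → V) : Prop :=
  ∃ p, Even p ∧ (∀ N, ∃ k, N ≤ k ∧ Ω (π k) = p) ∧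
    ∀ q, (∀ N, ∃ k, N ≤ k ∧ Ω (π k) = q) → p ≤ q

end GameGraph
/-- The game graph of Figure 1: vertices `q₀ = 0` (Eve's) and `q₁ = 1` (Adam's),
with a self-loop of weight 0 on `q₀`, an edge `q₀ → q₁` of weight 1, a self-loop of
weight 2 on `q₁`, and an edge `q₁ → q₀` of weight 1. -/
def G4 : GameGraph (Fin 2) where
  Eve := {0}
  E _ _ := True
  w u v := if u = v then (if u = 0 then 0 else 2) else 1
  init := 0
  succ v := ⟨v, trivial⟩

namespace GameGraph

section Strategies

variable {V : Type}

lemma prefixList_eq_append (π : ℕ → V) (i : ℕ) :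
    prefixList π i = List.ofFn (fun j : Fin i => π j) ++ [π i] :=
  List.ofFn_succ_last

lemma prefixList_succ (π : ℕ → V) (i : ℕ) :
    prefixList π (i + 1) = prefixList π i ++ [π (i + 1)] :=
  List.ofFn_succ_last

open Classical in
/-- The play resulting from a strategy `σ` of Eve and a strategy `τ` of Adam. -/
noncomputable def outcome (G : GameGraph V) (σ τ : List V → V) : ℕ → V
  | 0 => G.init
  | i + 1 =>
    let history := List.ofFn fun j : Fin (i + 1) => outcome G σ τ j
    if outcome G σ τ i ∈ G.Eve then σ history else τ history

lemma consEve_outcome (G : GameGraph V) (σ τ : List V → V) : G.ConsEve σ (G.outcome σ τ) := by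
  intro i hi
  rw [outcome, if_pos hi, prefixList]

lemma consAdam_outcome (G : GameGraph V) (σ τ : List V → V) : G.ConsAdam τ (G.outcome σ τ) := by
  intro i hi
  rw [outcome, if_neg hi, prefixList]

lemma isPlay_outcome {G : GameGraph V} {σ τ : List V → V} (hσ : G.EveLegal σ)
    (hτ : G.AdamLegal τ) : G.IsPlay (G.outcome σ τ) := by
  refine ⟨by rw [outcome], fun i => ?_⟩
  by_cases hi : G.outcome σ τ i ∈ G.Eve
  · rw [consEve_outcome G σ τ i hi, prefixList_eq_append]
    exact hσ _ _ hi
  · rw [consAdam_outcome G σ τ i hi, prefixList_eq_append]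
    exact hτ _ _ hi

/-- The history-based strategy computed by the machine `(m0, δ, o)`. The fold carries the memory
state together with the latest output; the value on the empty history is irrelevant. -/
def machineStrategy (G : GameGraph V) {M : Type} (m0 : M) (δ : M → V → M) (o : M → V → V)
    (l : List V) : V :=
  (l.foldl (fun s v => (δ s.1 v, o s.1 v)) (m0, G.init)).2

variable {M : Type} {m0 : M} {δ : M → V → M} {o : M → V → V}

lemma machineStrategy_prefixList (G : GameGraph V) (π : ℕ → V) (i : ℕ) :
    G.machineStrategy m0 δ o (prefixList π i) = o (memRun δ m0 π i) (π i) := by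
  have hfold : (prefixList π i).foldl (fun s v => (δ s.1 v, o s.1 v)) (m0, G.init) =
      (memRun δ m0 π (i + 1), o (memRun δ m0 π i) (π i)) := by
    induction i with
    | zero => simp [prefixList, memRun]
    | succ i ih => rw [prefixList_succ, List.foldl_append, ih]; rfl
  rw [machineStrategy, hfold]

lemma eveLegal_machineStrategy {G : GameGraph V} (ho : ∀ m, ∀ v ∈ G.Eve, G.E v (o m v)) :
    G.EveLegal (G.machineStrategy m0 δ o) := by
  intro l v hv
  rw [machineStrategy, List.foldl_append]
  exact ho _ v hv

lemma consEveFM_of_consEve {G : GameGraph V} {π : ℕ → V}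
    (h : G.ConsEve (G.machineStrategy m0 δ o) π) : G.ConsEveFM m0 δ o π := by
  intro i hi
  rw [h i hi, machineStrategy_prefixList]

lemma memRun_add_of_forall_eq {π : ℕ → V} {v : V} {s i : ℕ} (h : ∀ j < i, π (s + j) = v) :
    memRun δ m0 π (s + i) = (fun m => δ m v)^[i] (memRun δ m0 π s) := by
  induction i with
  | zero => rfl
  | succ i ih =>
    rw [Function.iterate_succ_apply', ← ih fun j hj => h j (by omega), ← h i i.lt_succ_self]
    rfl

end Strategies

lemma exists_forall_iterate_of_forall_le {M : Type*} [Finite M] (f : M → M) (p : M → Prop) :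
    ∃ B, ∀ m, (∀ i ≤ B, p (f^[i] m)) → ∀ i, p (f^[i] m) := by
  suffices ∀ m, ∀ᶠ B in atTop, (∀ i ≤ B, p (f^[i] m)) → ∀ i, p (f^[i] m) from
    (eventually_all.2 this).exists
  intro m
  by_cases hm : ∀ i, p (f^[i] m)
  · exact .of_forall fun _ _ => hm
  · obtain ⟨n, hn⟩ := not_forall.1 hm
    filter_upwards [eventually_ge_atTop n] with B hB hp using absurd (hp n hB) hn

/-- While the play stays in `v`, the memory evolves autonomously and takes finitely many values. -/
lemma exists_forall_eq_of_consEveFM {V M : Type} [Finite M] {G : GameGraph V} {v : V}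
    (hv : v ∈ G.Eve) (m0 : M) (δ : M → V → M) (o : M → V → V) :
    ∃ B, ∀ π, G.ConsEveFM m0 δ o π →
      ∀ s, (∀ i ≤ B, π (s + i) = v) → ∀ i, π (s + i) = v := by
  obtain ⟨B, hB⟩ := exists_forall_iterate_of_forall_le (fun m => δ m v) (fun m => o m v = v)
  refine ⟨B + 1, fun π hπ s hs => ?_⟩
  have next_eq {i : ℕ} (hi : ∀ j ≤ i, π (s + j) = v) :
      π (s + (i + 1)) = o ((fun m => δ m v)^[i] (memRun δ m0 π s)) v := by
    rw [← memRun_add_of_forall_eq fun j hj => hi j hj.le, ← add_assoc,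
      hπ (s + i) (by rwa [hi i le_rfl]), hi i le_rfl]
  have stay : ∀ i, o ((fun m => δ m v)^[i] (memRun δ m0 π s)) v = v :=
    hB _ fun i hi => by
      rw [← next_eq fun j hj => hs j (by omega), hs (i + 1) (by omega)]
  intro i
  induction i using Nat.strong_induction_on with
  | _ i ih =>
    cases i with
    | zero => exact hs 0 (Nat.zero_le _)
    | succ i => rw [next_eq fun j hj => ih j (by omega), stay]

section MeanPayoff

variable {V : Type} {G : GameGraph V} {π : ℕ → V} {c C : ℝ}

lemma MP_eq_of_eventually_eq {v : V} (h : ∀ᶠ i in atTop, π i = v) : G.MP π = G.w v v := by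
  have hw : Tendsto (fun i => (G.w (π i) (π (i + 1)) : ℝ)) atTop (nhds (G.w v v)) := by
    refine tendsto_nhds_of_eventually_eq ?_
    filter_upwards [h, (tendsto_add_atTop_nat 1).eventually h] with i hi hi'
    rw [hi, hi']
  refine Tendsto.liminf_eq (hw.cesaro.congr fun k => ?_)
  rw [partialSum, Int.cast_sum, div_eq_inv_mul]

variable [Finite V]

/-- Rules out the junk value of the real-valued `liminf` in `MP`. -/
lemma isBoundedUnder_abs_partialSum_div (G : GameGraph V) (π : ℕ → V) :
    IsBoundedUnder (· ≤ ·) atTop fun k : ℕ => |(G.partialSum π k : ℝ) / k| := by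
  obtain ⟨W, hW⟩ := (Set.finite_range fun e : V × V => |(G.w e.1 e.2 : ℝ)|).bddAbove
  have hstep (i : ℕ) : |(G.w (π i) (π (i + 1)) : ℝ)| ≤ W := hW ⟨(π i, π (i + 1)), rfl⟩
  refine isBoundedUnder_of ⟨W, fun k => ?_⟩
  rw [abs_div, Nat.abs_cast, partialSum, Int.cast_sum]
  refine div_le_of_le_mul₀ k.cast_nonneg ((abs_nonneg _).trans (hstep 0)) ?_
  calc |∑ i ∈ Finset.range k, (G.w (π i) (π (i + 1)) : ℝ)|
      ≤ ∑ i ∈ Finset.range k, |(G.w (π i) (π (i + 1)) : ℝ)| := Finset.abs_sum_le_sum_abs _ _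
    _ ≤ ∑ _i ∈ Finset.range k, W := Finset.sum_le_sum fun i _ => hstep i
    _ = W * k := by rw [Finset.sum_const, Finset.card_range, nsmul_eq_mul, mul_comm]

lemma le_MP (h : ∀ᶠ k : ℕ in atTop, c * k - C ≤ G.partialSum π k) : c ≤ G.MP π := by
  have hbdd := (isBoundedUnder_le_abs.1 (isBoundedUnder_abs_partialSum_div G π)).1
  refine le_of_forall_pos_sub_le fun ε hε => le_liminf_of_le hbdd.isCoboundedUnder_ge ?_
  filter_upwards [h, eventually_gt_atTop 0,
    (tendsto_const_div_atTop_nhds_zero_nat C).eventually_le_const hε] with k hk hpos hC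
  have hpos' : (0 : ℝ) < k := Nat.cast_pos.2 hpos
  rw [div_le_iff₀ hpos'] at hC
  rw [le_div_iff₀ hpos', sub_mul]
  linarith

lemma MP_le_of_frequently (h : ∃ᶠ k : ℕ in atTop, G.partialSum π k ≤ c * k + C) :
    G.MP π ≤ c := by
  have hbdd := (isBoundedUnder_le_abs.1 (isBoundedUnder_abs_partialSum_div G π)).2
  refine le_of_forall_pos_le_add fun ε hε => liminf_le_of_frequently_le ?_ hbdd
  refine (h.and_eventually ((eventually_gt_atTop 0).and
    ((tendsto_const_div_atTop_nhds_zero_nat C).eventually_le_const hε))).mono ?_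
  rintro k ⟨hk, hpos, hC⟩
  have hpos' : (0 : ℝ) < k := Nat.cast_pos.2 hpos
  rw [div_le_iff₀ hpos'] at hC
  rw [div_le_iff₀ hpos', add_mul]
  linarith

end MeanPayoff

section Balancing

variable {V : Type*} [DecidableEq V]

/-- The number of visits of `π` to `v` among its first `k` positions `π 0, …, π (k - 1)`. -/
def visits (π : ℕ → V) (v : V) (k : ℕ) : ℕ := Nat.count (fun i => π i = v) k

lemma visits_succ (π : ℕ → V) (v : V) (k : ℕ) :
    visits π v (k + 1) = visits π v k + if π k = v then 1 else 0 :=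
  Nat.count_succ _ _

lemma visits_add_le (π : ℕ → V) (v : V) (k n : ℕ) : visits π v (k + n) ≤ visits π v k + n := by
  rw [visits, Nat.count_add]
  exact Nat.add_le_add_left (Nat.count_le _) _

lemma count_prefixList {V : Type} [DecidableEq V] (π : ℕ → V) (v : V) (i : ℕ) :
    (prefixList π i).count v = visits π v (i + 1) := by
  induction i with
  | zero => simp [prefixList, visits, Nat.count_succ, List.count_singleton]
  | succ i ih =>
    rw [prefixList_succ, List.count_append, ih, visits_succ π v (i + 1), List.count_singleton]
    simp only [beq_iff_eq]

/-- The strategy of the owner of `v` in a game on the vertices `v` and `u` that keeps the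
frequency of `u` close to `1 / c`: move to `u` if that frequency is below `1 / c` on the history,
and stay in `v` otherwise. -/
def balancingStrategy (c : ℕ) (v u : V) (l : List V) : V :=
  if c * l.count u < l.length then u else v

/-- The sequence `π` moves between the two distinct vertices `v` and `u`, and its moves from `v` are
those of `balancingStrategy c v u`; the moves from `u` are arbitrary. -/
structure IsBalancing (c : ℕ) (v u : V) (π : ℕ → V) : Prop where
  ne : v ≠ u
  eq_or_eq : ∀ i, π i = v ∨ π i = u
  next_eq : ∀ i, π i = v → π (i + 1) = if c * visits π u (i + 1) < i + 1 then u else v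

lemma balancingStrategy_prefixList {V : Type} [DecidableEq V] (c : ℕ) (v u : V) (π : ℕ → V)
    (i : ℕ) : balancingStrategy c v u (prefixList π i) =
      if c * visits π u (i + 1) < i + 1 then u else v := by
  rw [balancingStrategy, count_prefixList, prefixList, List.length_ofFn]

namespace IsBalancing

variable {c : ℕ} {v u : V} {π : ℕ → V}

lemma visits_succ_of_eq (h : IsBalancing c v u π) {k : ℕ} (hk : π k = v) :
    visits π u (k + 1) = visits π u k := by
  rw [visits_succ, if_neg (hk ▸ h.ne), add_zero]

lemma visits_add_visits (h : IsBalancing c v u π) (k : ℕ) : visits π v k + visits π u k = k := by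
  induction k with
  | zero => rfl
  | succ k ih =>
    rw [visits_succ, visits_succ]
    rcases h.eq_or_eq k with hk | hk <;> simp only [hk, h.ne, h.ne.symm, if_true, if_false] <;>
      omega

lemma le_mul_visits_add_one (h : IsBalancing c v u π) (hc : 2 ≤ c) (k : ℕ) :
    k ≤ c * visits π u k + 1 := by
  -- The estimate alone is not inductive: on `v` it has to hold without the error term.
  suffices k ≤ c * visits π u k + 1 ∧ (π k = v → k ≤ c * visits π u k) from this.1
  induction k with
  | zero => simp
  | succ k ih =>
    rcases h.eq_or_eq k with hk | hk
    · have hnext := h.next_eq k hk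
      rw [h.visits_succ_of_eq hk] at hnext ⊢
      refine ⟨Nat.succ_le_succ (ih.2 hk), fun hv => ?_⟩
      by_contra! hlt
      rw [if_pos hlt] at hnext
      exact h.ne (hv.symm.trans hnext)
    · rw [visits_succ, if_pos hk, mul_add, mul_one]
      omega

lemma frequently_mul_visits_le (h : IsBalancing c v u π) (hv : ∃ᶠ i in atTop, π i = v) :
    ∃ᶠ k in atTop, c * visits π u k ≤ k := by
  refine frequently_atTop.2 fun a => ?_
  obtain ⟨n, han, hn⟩ := frequently_atTop.1 hv a
  by_contra! hlt
  have stay (j : ℕ) : π (n + j) = v ∧ visits π u (n + j) = visits π u n := by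
    induction j with
    | zero => exact ⟨hn, rfl⟩
    | succ j ih =>
      refine ⟨?_, (h.visits_succ_of_eq ih.1).trans ih.2⟩
      rw [← add_assoc, h.next_eq _ ih.1, if_neg (hlt _ (by omega)).le.not_gt]
  have := hlt (n + c * visits π u n) (by omega)
  rw [(stay _).2] at this
  omega

lemma mul_visits_le_of_eq_succ (h : IsBalancing c v u π) {k : ℕ} (hk : π k = v)
    (hk' : π (k + 1) = u) : c * visits π u (k + 1) ≤ k + 1 := by
  by_contra! hlt
  have hnext := h.next_eq k hk
  rw [if_neg hlt.not_gt] at hnext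
  exact h.ne (hnext.symm.trans hk')

lemma exists_run_start (h : IsBalancing c v u π) {k : ℕ} (hk : π k = u) :
    ∃ s ≤ k, (∀ i, s ≤ i → i ≤ k → π i = u) ∧ c * visits π u s ≤ s := by
  induction k with
  | zero => exact ⟨0, le_rfl, fun i _ hi => by rwa [Nat.le_zero.1 hi], by simp [visits]⟩
  | succ k ih =>
    rcases h.eq_or_eq k with hv | hu
    · exact ⟨k + 1, le_rfl, fun i hi hi' => by rwa [le_antisymm hi' hi],
        h.mul_visits_le_of_eq_succ hv hk⟩
    · obtain ⟨s, hsk, hrun, hs⟩ := ih hu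
      refine ⟨s, by omega, fun i hi hi' => ?_, hs⟩
      rcases hi'.eq_or_lt with rfl | hlt
      · exact hk
      · exact hrun i hi (Nat.lt_succ_iff.1 hlt)

lemma mul_visits_le (h : IsBalancing c v u π) {B : ℕ} (hB : ∀ s, ∃ i ≤ B, π (s + i) = v)
    (k : ℕ) : c * visits π u k ≤ k + c * B := by
  induction k with
  | zero => simp [visits]
  | succ k ih =>
    rcases h.eq_or_eq k with hv | hu
    · rw [h.visits_succ_of_eq hv]
      omega
    · obtain ⟨s, hsk, hrun, hs⟩ := h.exists_run_start hu
      obtain ⟨i, hiB, hi⟩ := hB s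
      have hki : k < s + i := by
        by_contra! hle
        exact h.ne (hi.symm.trans (hrun _ (by omega) hle))
      calc c * visits π u (k + 1)
          ≤ c * (visits π u s + B) := by
            gcongr
            exact (Nat.count_monotone _ (by omega)).trans (visits_add_le π u s B)
        _ = c * visits π u s + c * B := mul_add _ _ _
        _ ≤ k + 1 + c * B := by omega

end IsBalancing

end Balancing

end GameGraph

namespace G4

open GameGraph

variable {π : ℕ → Fin 2}

lemma w_eq (u v : Fin 2) : G4.w u v = (u : ℤ) + v := by
  fin_cases u <;> fin_cases v <;> rfl

lemma partialSum_eq (π : ℕ → Fin 2) (k : ℕ) :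
    G4.partialSum π k = 2 * visits π 1 k + (π k : ℤ) - (π 0 : ℤ) := by
  induction k with
  | zero => simp [partialSum, visits]
  | succ k ih =>
    rw [partialSum, Finset.sum_range_succ, ← partialSum, ih, w_eq, visits_succ]
    split_ifs with hk <;> grind

lemma abs_partialSum_sub_two_mul_visits_le (π : ℕ → Fin 2) (k : ℕ) :
    |(G4.partialSum π k : ℝ) - 2 * visits π 1 k| ≤ 1 := by
  have hint : |G4.partialSum π k - 2 * visits π 1 k| ≤ 1 := by
    rw [partialSum_eq, abs_le]
    omega
  exact_mod_cast hint

lemma MP_eq_one_half (h : IsBalancing 4 0 1 π) (hfreq : ∃ᶠ i in atTop, π i = 0) :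
    G4.MP π = 1 / 2 := by
  apply le_antisymm
  · refine MP_le_of_frequently (C := 1) ((h.frequently_mul_visits_le hfreq).mono fun k hk => ?_)
    have hk' : (4 * visits π 1 k : ℝ) ≤ k := by exact_mod_cast hk
    linarith [(abs_le.1 (abs_partialSum_sub_two_mul_visits_le π k)).2]
  · refine le_MP (C := 2) (.of_forall fun k => ?_)
    have hk : (k : ℝ) ≤ 4 * visits π 1 k + 1 := by
      exact_mod_cast h.le_mul_visits_add_one (by norm_num) k
    linarith [(abs_le.1 (abs_partialSum_sub_two_mul_visits_le π k)).1]

lemma MP_eq_three_halves (h : IsBalancing 4 1 0 π) {B : ℕ}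
    (hB : ∀ s, ∃ i ≤ B, π (s + i) = 1) : G4.MP π = 3 / 2 := by
  have hsum (k : ℕ) : (visits π 1 k + visits π 0 k : ℝ) = k := by
    exact_mod_cast h.visits_add_visits k
  apply le_antisymm
  · refine MP_le_of_frequently (C := 2) (Eventually.of_forall fun k => ?_).frequently
    have hk : (k : ℝ) ≤ 4 * visits π 0 k + 1 := by
      exact_mod_cast h.le_mul_visits_add_one (by norm_num) k
    linarith [(abs_le.1 (abs_partialSum_sub_two_mul_visits_le π k)).2, hsum k]
  · refine le_MP (C := 2 * B + 1) (.of_forall fun k => ?_)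
    have hk : (4 * visits π 0 k : ℝ) ≤ k + 4 * B := by exact_mod_cast h.mul_visits_le hB k
    linarith [(abs_le.1 (abs_partialSum_sub_two_mul_visits_le π k)).1, hsum k]

lemma isBalancing_of_consEve (h : G4.ConsEve (balancingStrategy 4 0 1) π) :
    IsBalancing 4 0 1 π where
  ne := zero_ne_one
  eq_or_eq _ := by omega
  next_eq i hi := by rw [h i hi, balancingStrategy_prefixList]

lemma isBalancing_of_consAdam (h : G4.ConsAdam (balancingStrategy 4 1 0) π) :
    IsBalancing 4 1 0 π where
  ne := one_ne_zero
  eq_or_eq _ := by omega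
  next_eq i hi := by
    rw [h i (by simp [G4, hi]), balancingStrategy_prefixList]

lemma MP_eq_one_half_or_two_of_consEve (h : G4.ConsEve (balancingStrategy 4 0 1) π) :
    G4.MP π = 1 / 2 ∨ G4.MP π = 2 := by
  by_cases hfreq : ∃ᶠ i in atTop, π i = 0
  · exact .inl (MP_eq_one_half (isBalancing_of_consEve h) hfreq)
  · have hone : ∀ᶠ i in atTop, π i = 1 :=
      (not_frequently.1 hfreq).mono fun i hi => by omega
    exact .inr (by simpa [w_eq] using MP_eq_of_eventually_eq (G := G4) hone)

lemma MP_eq_zero_or_three_halves_of_consEveFM_of_consAdam {M : Type} [Finite M] {m0 : M}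
    {δ : M → Fin 2 → M} {o : M → Fin 2 → Fin 2} (hE : G4.ConsEveFM m0 δ o π)
    (hA : G4.ConsAdam (balancingStrategy 4 1 0) π) : G4.MP π = 0 ∨ G4.MP π = 3 / 2 := by
  obtain ⟨B, hB⟩ := exists_forall_eq_of_consEveFM (G := G4) (v := 0) rfl m0 δ o
  by_cases hs : ∃ s, ∀ i ≤ B, π (s + i) = 0
  · obtain ⟨s, hs⟩ := hs
    have hzero : ∀ᶠ i in atTop, π i = 0 := by
      filter_upwards [eventually_ge_atTop s] with i hi
      rw [← Nat.add_sub_cancel' hi, hB π hE s hs]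
    exact .inl (by simpa [w_eq] using MP_eq_of_eventually_eq (G := G4) hzero)
  · push Not at hs
    refine .inr (MP_eq_three_halves (isBalancing_of_consAdam hA) (B := B) fun s => ?_)
    exact (hs s).imp fun i hi => ⟨hi.1, by omega⟩

end G4

/-- In the interval mean-payoff game of Figure 1 with
`I = (0,1] ∪ [2,∞)`, Eve has a winning strategy but no finite-memory winning
strategy. -/
theorem stmt4 :
    G4.EveWins (fun π => G4.MP π ∈ Set.Ioc (0 : ℝ) 1 ∪ Set.Ici (2 : ℝ)) ∧
      ¬ G4.EveWinsFM (fun π => G4.MP π ∈ Set.Ioc (0 : ℝ) 1 ∪ Set.Ici (2 : ℝ)) := by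
  constructor
  · refine ⟨GameGraph.balancingStrategy 4 0 1, fun _ _ _ => trivial, fun π _ hE => ?_⟩
    rcases G4.MP_eq_one_half_or_two_of_consEve hE with hMP | hMP <;> norm_num [hMP]
  · rintro ⟨M, _, m0, δ, o, ho, hwin⟩
    let σ := G4.machineStrategy m0 δ o
    let τ : List (Fin 2) → Fin 2 := GameGraph.balancingStrategy 4 1 0
    have hplay : G4.IsPlay (G4.outcome σ τ) :=
      GameGraph.isPlay_outcome (GameGraph.eveLegal_machineStrategy ho) fun _ _ _ => trivial
    have hE : G4.ConsEveFM m0 δ o (G4.outcome σ τ) :=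
      GameGraph.consEveFM_of_consEve (G4.consEve_outcome σ τ)
    have hI := hwin _ hplay hE
    rcases G4.MP_eq_zero_or_three_halves_of_consEveFM_of_consAdam hE (G4.consAdam_outcome σ τ)
      with hMP | hMP <;> norm_num [hMP] at hI
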